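/- arXiv:2101.06822 — 2 statements merged into one kernel-verified Lean document; each statement's English description precedes it below -/
import Mathlib

section
/- Let P be a submonoid of a group G and let 𝔍 := {K(α) : α ∈ 𝒲(P)} be the collection of constructible right ideals of P. Then: (1) 𝔍 = {K(α) : α ∈ 𝒲(P), α̇ = e} = {K(α̃α) : α ∈ 𝒲(P)}; (2) P ∈ 𝔍; (3) K(α) ∩ K(β) ∈ 𝔍 for all words α, β; (4) K(α)·p ⊆ K(α) for every word α and every p ∈ P (each K(α) is a right ideal of P); (5) p·K(α) ∈ 𝔍 for every word α and p ∈ P; (6) P ∩ p⁻¹·K(α) ∈ 𝔍 for every word α and p ∈ P. Moreover, 𝔍 is the smallest collection of subsets of P that contains P and is invariant under the operations S ↦ pS and S ↦ P ∩ p⁻¹S for all p ∈ P; that is, any collection 𝒞 of subsets of P with P ∈ 𝒞 that is closed under these two operations satisfies 𝔍 ⊆ 𝒞. -/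
/-!
Peeling off the last pair of a word gives `K(α(p, q)) = P ∩ q⁻¹pK(α)` (`mem_Kset_snoc`), and more
generally `K(αβ) = K(β) ∩ β̇⁻¹K(α)` (`mem_Kset_append`). Consequently `pK(α) = K(α(p, e))` and
`P ∩ p⁻¹K(α) = K(α(e, p))`, and minimality of `𝔍` is an induction on the word, because
`K(α(p, q))` arises from `K(α)` by the operation `S ↦ pS` followed by `S ↦ P ∩ q⁻¹S`.

Left multiplication by `α̇` maps `K(α)` into `K(α̃)` (`dotProd_mul_mem_Kset_rev`), so
`K(α̃α) = K(α) ∩ α̇⁻¹K(α̃) = K(α)`. As `α̃α` is neutral, every constructible ideal comes from a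
neutral word, and then `K(αβ̃β) = K(α) ∩ K(β)`.
-/


namespace PaperToeplitz

variable {G : Type*} [Group G]

/-- A word `(p₁, p₂, …, p_{2k-1}, p_{2k})` in `P`, encoded as its list of consecutive pairs
`[(p₁,p₂), …, (p_{2k-1},p_{2k})]`. Concatenation of words is list append. -/
abbrev Word (P : Submonoid G) : Type _ := List (P × P)

/-- The generalized left quotient `α̇ := p₁⁻¹ p₂ ⋯ p_{2k-1}⁻¹ p_{2k} ∈ G`.
A word is *neutral* if `α̇ = 1`. -/
def dotProd {P : Submonoid G} (α : Word P) : G :=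
  (α.map fun x => ((x.1 : G))⁻¹ * (x.2 : G)).prod

/-- The reverse word `α̃ := (p_{2k}, p_{2k-1}, …, p₂, p₁)`. -/
def rev {P : Submonoid G} (α : Word P) : Word P :=
  α.reverse.map fun x => (x.2, x.1)

/-- The iterated quotient set
`Q(α) := {e, p_{2k}⁻¹p_{2k-1}, p_{2k}⁻¹p_{2k-1}p_{2k-2}⁻¹p_{2k-3}, …, p_{2k}⁻¹p_{2k-1}⋯p₂⁻¹p₁}`,
realized as the set of prefix products. -/
def Qset {P : Submonoid G} (α : Word P) : Set G :=
  {g | ∃ n : ℕ, ((α.reverse.map fun x => ((x.2 : G))⁻¹ * (x.1 : G)).take n).prod = g}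

/-- The left translate `xP = {xq : q ∈ P}` of `P`, as a subset of `G`. -/
def lcos (P : Submonoid G) (x : G) : Set G := {y : G | x⁻¹ * y ∈ P}

/-- The constructible ideal `K(α) := ⋂_{g ∈ Q(α)} gP` (a subset of `P` since `e ∈ Q(α)`). -/
def Kset {P : Submonoid G} (α : Word P) : Set G :=
  ⋂ g ∈ Qset α, lcos P g

/-- The collection `𝔍(P)` of constructible right ideals of `P`. -/
def CIdeals (P : Submonoid G) : Set (Set G) := {S | ∃ α : Word P, Kset α = S}

end PaperToeplitz

namespace PaperToeplitz

section

variable {G : Type*} [Group G] {P : Submonoid G}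

lemma Kset_nil : Kset ([] : Word P) = (P : Set G) := by
  ext x
  simp [Kset, Qset, lcos]

lemma mem_Kset_iff (α : Word P) (x : G) :
    x ∈ Kset α ↔ ∀ n : ℕ,
      (((α.reverse.map fun x => ((x.2 : G))⁻¹ * (x.1 : G)).take n).prod)⁻¹ * x ∈ P := by
  simp [Kset, Qset, lcos]

/-- The recursion `K(α(p, q)) = P ∩ q⁻¹pK(α)`. -/
lemma mem_Kset_snoc (α : Word P) (a : P × P) (x : G) :
    x ∈ Kset (α ++ [a]) ↔ x ∈ P ∧ (a.1 : G)⁻¹ * (a.2 : G) * x ∈ Kset α := by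
  rw [mem_Kset_iff, mem_Kset_iff]
  constructor
  · intro h
    refine ⟨by simpa using h 0, fun n => ?_⟩
    simpa [mul_assoc] using h (n + 1)
  · rintro ⟨h0, h⟩ (_ | n)
    · simpa using h0
    · simpa [mul_assoc] using h n

lemma mem_of_mem_Kset {α : Word P} {x : G} (h : x ∈ Kset α) : x ∈ P := by
  simpa using (mem_Kset_iff α x).1 h 0

lemma dotProd_append (α β : Word P) : dotProd (α ++ β) = dotProd α * dotProd β := by
  simp [dotProd]

lemma dotProd_singleton (a : P × P) : dotProd [a] = (a.1 : G)⁻¹ * (a.2 : G) := by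
  simp [dotProd]

/-- Concatenation of words: `K(αβ) = K(β) ∩ β̇⁻¹K(α)`. -/
lemma mem_Kset_append (α β : Word P) (x : G) :
    x ∈ Kset (α ++ β) ↔ x ∈ Kset β ∧ dotProd β * x ∈ Kset α := by
  induction β using List.reverseRecOn generalizing x with
  | nil =>
    simpa [Kset_nil, dotProd] using fun h => mem_of_mem_Kset h
  | append_singleton β a ih =>
    rw [← List.append_assoc, mem_Kset_snoc, mem_Kset_snoc, ih, dotProd_append,
      dotProd_singleton, and_assoc]
    simp only [mul_assoc]

lemma rev_snoc (α : Word P) (a : P × P) : rev (α ++ [a]) = [(a.2, a.1)] ++ rev α := by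
  simp [rev]

lemma dotProd_rev (α : Word P) : dotProd (rev α) = (dotProd α)⁻¹ := by
  induction α using List.reverseRecOn with
  | nil => simp [rev, dotProd]
  | append_singleton α a ih =>
    rw [rev_snoc, dotProd_append, dotProd_append, ih, dotProd_singleton, dotProd_singleton]
    simp

/-- Left multiplication by `α̇` maps `K(α)` into `K(α̃)`. -/
lemma dotProd_mul_mem_Kset_rev (α : Word P) {x : G} (h : x ∈ Kset α) :
    dotProd α * x ∈ Kset (rev α) := by
  induction α using List.reverseRecOn generalizing x with
  | nil => simpa [rev, dotProd] using h
  | append_singleton α a ih =>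
    obtain ⟨hx, hy⟩ := (mem_Kset_snoc _ _ _).1 h
    rw [rev_snoc, mem_Kset_append, dotProd_append, dotProd_singleton, dotProd_rev, mul_assoc]
    refine ⟨ih hy, ?_⟩
    rw [inv_mul_cancel_left, ← List.nil_append [_], mem_Kset_snoc, Kset_nil]
    exact ⟨mem_of_mem_Kset hy, by simpa [mul_assoc] using hx⟩

lemma Kset_rev_append (α : Word P) : Kset (rev α ++ α) = Kset α := by
  ext x
  rw [mem_Kset_append]
  exact ⟨fun h => h.1, fun h => ⟨h, dotProd_mul_mem_Kset_rev α h⟩⟩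

lemma dotProd_rev_append (α : Word P) : dotProd (rev α ++ α) = 1 := by
  rw [dotProd_append, dotProd_rev, inv_mul_cancel]

end

/-- Properties of the collection `𝔍 = {K(α) : α ∈ 𝒲(P)}` of constructible right ideals:
(1) `𝔍` is parametrized by neutral words, indeed by words of the form `α̃α`;
(2) `P ∈ 𝔍`; (3) `𝔍` is closed under intersections; (4) each `K(α)` is a right ideal of `P`;
(5) `pK(α) ∈ 𝔍`; (6) `P ∩ p⁻¹K(α) ∈ 𝔍`; and `𝔍` is the smallest collection of subsets of `P`
containing `P` and invariant under the operations `S ↦ pS` and `S ↦ P ∩ p⁻¹S` for `p ∈ P`. -/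
theorem statement4 {G : Type*} [Group G] (P : Submonoid G) :
    (CIdeals P = {S | ∃ α : Word P, dotProd α = 1 ∧ Kset α = S} ∧
      CIdeals P = {S | ∃ α : Word P, Kset (rev α ++ α) = S}) ∧
    (P : Set G) ∈ CIdeals P ∧
    (∀ α β : Word P, Kset α ∩ Kset β ∈ CIdeals P) ∧
    (∀ (α : Word P) (p : P), ∀ x ∈ Kset α, x * (p : G) ∈ Kset α) ∧
    (∀ (α : Word P) (p : P), (fun y => (p : G) * y) '' Kset α ∈ CIdeals P) ∧
    (∀ (α : Word P) (p : P),
      (P : Set G) ∩ ((fun y => ((p : G))⁻¹ * y) '' Kset α) ∈ CIdeals P) ∧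
    (∀ C : Set (Set G), (P : Set G) ∈ C →
      (∀ S ∈ C, ∀ p : P, (fun y => (p : G) * y) '' S ∈ C) →
      (∀ S ∈ C, ∀ p : P, (P : Set G) ∩ ((fun y => ((p : G))⁻¹ * y) '' S) ∈ C) →
      CIdeals P ⊆ C) := by
  refine ⟨⟨?_, ?_⟩, ⟨[], Kset_nil⟩, ?_, ?_, ?_, ?_, ?_⟩
  · ext S
    constructor
    · rintro ⟨α, rfl⟩
      exact ⟨rev α ++ α, dotProd_rev_append α, Kset_rev_append α⟩
    · rintro ⟨α, -, h⟩
      exact ⟨α, h⟩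
  · simp only [Kset_rev_append, CIdeals]
  · intro α β
    refine ⟨α ++ (rev β ++ β), ?_⟩
    ext x
    rw [mem_Kset_append, Kset_rev_append, dotProd_rev_append, one_mul, Set.mem_inter_iff,
      and_comm]
  · intro α p x hx
    rw [mem_Kset_iff] at hx ⊢
    intro n
    rw [← mul_assoc]
    exact P.mul_mem (hx n) p.2
  · intro α p
    refine ⟨α ++ [(p, 1)], ?_⟩
    ext x
    rw [mem_Kset_snoc, Set.image_mul_left, Set.mem_preimage]
    simp only [OneMemClass.coe_one, mul_one, and_iff_right_iff_imp]
    intro h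
    simpa using P.mul_mem p.2 (mem_of_mem_Kset h)
  · intro α p
    refine ⟨α ++ [(1, p)], ?_⟩
    ext x
    rw [mem_Kset_snoc, Set.image_mul_left, Set.mem_inter_iff, Set.mem_preimage]
    simp
  · rintro C hP hmul hinv S ⟨α, rfl⟩
    induction α using List.reverseRecOn with
    | nil => rwa [Kset_nil]
    | append_singleton α a ih =>
      convert hinv _ (hmul _ ih a.1) a.2 using 1
      ext x
      rw [mem_Kset_snoc, Set.image_mul_left, Set.image_mul_left, Set.mem_inter_iff]
      simp [mul_assoc]

end PaperToeplitz
end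

section
/- Let P be a submonoid of a group G. For a finite set F ⊆ G let Δ_F := {p ∈ P : for every g ∈ F, either pP ∩ gP = ∅ or pP ∩ gP = pP}. Let α be a neutral word and let A be a finite collection of neutral words with ⋃_{β∈A} K(β) ⊆ K(α). Then there exists a finite set F ⊆ G such that Δ_F ∩ (K(α) ∖ ⋃_{β∈A} K(β)) = ∅ if and only if for every p ∈ K(α) one has pP ∩ ⋃_{β∈A} K(β) ≠ ∅. -/
namespace PaperToeplitz

/-- `Δ_F := {p ∈ P : for every g ∈ F, either pP ∩ gP = ∅ or pP ∩ gP = pP}`. -/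
def DeltaF {G : Type*} [Group G] (P : Submonoid G) (F : Finset G) : Set G :=
  {p : G | p ∈ P ∧ ∀ g ∈ F, lcos P p ∩ lcos P g = ∅ ∨ lcos P p ∩ lcos P g = lcos P p}

theorem mem_lcos_self {G : Type*} [Group G] (P : Submonoid G) (x : G) : x ∈ lcos P x := by
  simp [lcos]

theorem mem_lcos_trans {G : Type*} [Group G] {P : Submonoid G} {x y z : G}
    (hy : y ∈ lcos P x) (hz : z ∈ lcos P y) : z ∈ lcos P x := by
  have h := P.mul_mem hy hz
  simpa [lcos, mul_assoc] using h

/-- `K(α)` is a right ideal. -/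
theorem mem_Kset_of_mem_lcos {G : Type*} [Group G] {P : Submonoid G} {α : Word P} {p q : G}
    (hp : p ∈ Kset α) (hq : q ∈ lcos P p) : q ∈ Kset α :=
  Set.mem_iInter₂.2 fun g hg => mem_lcos_trans (Set.mem_iInter₂.1 hp g hg) hq

/-- The empty prefix product gives `1 ∈ Q(α)`, so `K(α) ⊆ 1P = P`. -/
theorem Kset_subset {G : Type*} [Group G] {P : Submonoid G} (α : Word P) :
    Kset α ⊆ (P : Set G) := fun p hp => by
  have h := Set.mem_iInter₂.1 hp 1 ⟨0, by simp⟩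
  simpa [lcos] using h

theorem Qset_finite {G : Type*} [Group G] {P : Submonoid G} (α : Word P) :
    (Qset α).Finite := by
  -- Truncation lengths beyond the length of the word add no new prefix products.
  refine ((Set.finite_Iic α.length).image fun n =>
    ((α.reverse.map fun x => ((x.2 : G))⁻¹ * (x.1 : G)).take n).prod).subset ?_
  rintro g ⟨n, rfl⟩
  rcases le_total n α.length with hn | hn
  · exact ⟨n, hn, rfl⟩
  · refine ⟨α.length, Set.mem_Iic.2 le_rfl, ?_⟩
    dsimp only
    rw [List.take_of_length_le (i := n) (by simpa using hn),
      List.take_of_length_le (i := α.length) (by simp)]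

/-- Every principal right ideal `pP` contains a `q` that decides all `g ∈ F`: if the current `qP`
meets `gP`, move `q` to a common element; the alternatives settled for earlier elements of `F`
persist when `qP` shrinks. -/
theorem exists_mem_lcos_forall {G : Type*} [Group G] (P : Submonoid G) (F : Finset G) (p : G) :
    ∃ q ∈ lcos P p, ∀ g ∈ F,
      lcos P q ∩ lcos P g = ∅ ∨ lcos P q ∩ lcos P g = lcos P q := by
  classical
  induction F using Finset.induction_on with
  | empty => exact ⟨p, mem_lcos_self P p, by simp⟩
  | insert a F _ ih =>
    obtain ⟨q, hqp, hq⟩ := ih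
    by_cases hne : (lcos P q ∩ lcos P a).Nonempty
    · obtain ⟨r, hrq, hra⟩ := hne
      have hsub : lcos P r ⊆ lcos P q := fun z hz => mem_lcos_trans hrq hz
      refine ⟨r, mem_lcos_trans hqp hrq, fun g hg => ?_⟩
      rcases Finset.mem_insert.1 hg with rfl | hg
      · exact Or.inr (Set.inter_eq_left.2 fun z hz => mem_lcos_trans hra hz)
      · rcases hq g hg with h0 | h1
        · exact Or.inl (Set.subset_eq_empty (Set.inter_subset_inter_left _ hsub) h0)
        · exact Or.inr (Set.inter_eq_left.2 (hsub.trans (Set.inter_eq_left.1 h1)))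
    · refine ⟨q, hqp, fun g hg => ?_⟩
      rcases Finset.mem_insert.1 hg with rfl | hg
      · exact Or.inl (Set.not_nonempty_iff_eq_empty.1 hne)
      · exact hq g hg

/-- For a neutral word `α` and a finite collection `A` of neutral words with
`⋃_{β∈A} K(β) ⊆ K(α)`: there is a finite `F ⊆ G` with
`Δ_F ∩ (K(α) ∖ ⋃_{β∈A} K(β)) = ∅` if and only if `pP ∩ ⋃_{β∈A} K(β) ≠ ∅` for every
`p ∈ K(α)`. -/
theorem statement12 {G : Type*} [Group G] (P : Submonoid G)
    (α : Word P) (A : Finset (Word P))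
    (hα : dotProd α = 1) (hA : ∀ β ∈ A, dotProd β = 1)
    (hsub : (⋃ β ∈ A, Kset β) ⊆ Kset α) :
    (∃ F : Finset G, DeltaF P F ∩ (Kset α \ ⋃ β ∈ A, Kset β) = ∅) ↔
      ∀ p ∈ Kset α, (lcos P p ∩ ⋃ β ∈ A, Kset β).Nonempty := by
  classical
  constructor
  · rintro ⟨F, hF⟩ p hp
    by_contra hne
    obtain ⟨q, hqp, hq⟩ := exists_mem_lcos_forall P F p
    have hqK : q ∈ Kset α := mem_Kset_of_mem_lcos hp hqp
    have hmem : q ∈ DeltaF P F ∩ (Kset α \ ⋃ β ∈ A, Kset β) :=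
      ⟨⟨Kset_subset α hqK, hq⟩, hqK, fun hqA => hne ⟨q, hqp, hqA⟩⟩
    rw [hF] at hmem
    exact hmem
  · intro h
    refine ⟨A.biUnion fun β => (Qset_finite β).toFinset, ?_⟩
    rw [Set.eq_empty_iff_forall_notMem]
    rintro p ⟨⟨-, hpF⟩, hpα, hpA⟩
    obtain ⟨y, hyp, hyA⟩ := h p hpα
    simp only [Set.mem_iUnion] at hyA hpA
    obtain ⟨β, hβ, hyβ⟩ := hyA
    refine hpA ⟨β, hβ, Set.mem_iInter₂.2 fun g hg => ?_⟩
    have hgF : g ∈ A.biUnion fun β => (Qset_finite β).toFinset :=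
      Finset.mem_biUnion.2 ⟨β, hβ, (Qset_finite β).mem_toFinset.2 hg⟩
    rcases hpF g hgF with h0 | h1
    · -- `y` witnesses that `pP ∩ gP` is nonempty.
      have hy : y ∈ lcos P p ∩ lcos P g := ⟨hyp, Set.mem_iInter₂.1 hyβ g hg⟩
      rw [h0] at hy
      exact hy.elim
    · exact Set.inter_eq_left.1 h1 (mem_lcos_self P p)

end PaperToeplitz
end
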